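/- Let V be a representation of the Yangian Y(gl_n) which is irreducible (the only subspaces of V invariant under all the operators T_{ij}^{(r)} are 0 and V) and is a highest weight representation: there is a nonzero vector ζ_0 ∈ V such that T_{ij}^{(r)} ζ_0 = 0 for all i < j and r ≥ 1, and each T_{ii}^{(r)} ζ_0 is a scalar multiple of ζ_0. Then every vector ζ ∈ V satisfying T_{ij}^{(r)} ζ = 0 for all i < j and r ≥ 1 is a scalar multiple of ζ_0. -/

import Mathlib

/-- A representation of the Yangian `Y(gl_n)` on a complex vector space `V`:
a family of operators `T r i j` (`r ≥ 1`), with `T 0 i j = δ_{ij}·id`,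
satisfying the defining relations
`[T^{(r+1)}_{ij}, T^{(s)}_{kl}] − [T^{(r)}_{ij}, T^{(s+1)}_{kl}]
  = T^{(r)}_{kj} T^{(s)}_{il} − T^{(s)}_{kj} T^{(r)}_{il}`. -/
def IsYangianRep (n : ℕ) {V : Type*} [AddCommGroup V] [Module ℂ V]
    (T : ℕ → Fin n → Fin n → (V →ₗ[ℂ] V)) : Prop :=
  (∀ i j : Fin n, T 0 i j = if i = j then LinearMap.id else 0) ∧
  (∀ r s : ℕ, ∀ i j k l : Fin n,
    (T (r + 1) i j ∘ₗ T s k l - T s k l ∘ₗ T (r + 1) i j)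
      - (T r i j ∘ₗ T (s + 1) k l - T (s + 1) k l ∘ₗ T r i j)
    = T r k j ∘ₗ T s i l - T s k j ∘ₗ T r i l)


namespace YangianAux

variable {n : ℕ} {V : Type*} [AddCommGroup V] [Module ℂ V]
  {T : ℕ → Fin n → Fin n → (V →ₗ[ℂ] V)}

/-- The commutator of two generators lies in any subspace containing the products of
total degree one less. -/
theorem comm_mem (hT : IsYangianRep n T) (i j k l : Fin n) (v : V) (M : Submodule ℂ V)
    (r : ℕ) : ∀ s : ℕ,
    (∀ a b : ℕ, a + b + 1 = r + s → T a k j (T b i l v) ∈ M) →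
    T r i j (T s k l v) - T s k l (T r i j v) ∈ M := by
  induction r with
  | zero =>
    intro s _
    rw [hT.1 i j]
    split_ifs <;> simp
  | succ r ih =>
    intro s h
    have h1 := ih (s + 1) (fun a b hab => h a b (by omega))
    have h2 := LinearMap.congr_fun (hT.2 r s i j k l) v
    simp only [LinearMap.sub_apply, LinearMap.comp_apply] at h2
    have h3 := h r s (by omega)
    have h4 := h s r (by omega)
    have h5 := M.add_mem h1 (M.sub_mem h3 h4)
    rw [← h2] at h5
    convert h5 using 1
    abel

/-- Vectors obtained from `W` by lowering words of degree at most `d`. -/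
inductive Low (T : ℕ → Fin n → Fin n → (V →ₗ[ℂ] V)) (W : Submodule ℂ V) : ℕ → V → Prop
  | base (d : ℕ) (w : V) (hw : w ∈ W) : Low T W d w
  | step (r d e : ℕ) (i j : Fin n) (v : V) (hr : 1 ≤ r) (hij : j < i) (hd : r + d ≤ e)
      (hv : Low T W d v) : Low T W e (T r i j v)
  | add (d : ℕ) (v w : V) (hv : Low T W d v) (hw : Low T W d w) : Low T W d (v + w)
  | smul (d : ℕ) (c : ℂ) (v : V) (hv : Low T W d v) : Low T W d (c • v)

theorem Low.mono {W : Submodule ℂ V} {d : ℕ} {v : V} (h : Low T W d v) :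
    ∀ e : ℕ, d ≤ e → Low T W e v := by
  induction h with
  | base d w hw => exact fun e _ => Low.base e w hw
  | step r d e i j v hr hij hd hv _ =>
    exact fun e' he => Low.step r d e' i j v hr hij (hd.trans he) hv
  | add d v w _ _ h1 h2 => exact fun e he => Low.add e v w (h1 e he) (h2 e he)
  | smul d c v _ h => exact fun e he => Low.smul e c v (h e he)

/-- The subspace of degree at most `d`. -/
def lowSub (T : ℕ → Fin n → Fin n → (V →ₗ[ℂ] V)) (W : Submodule ℂ V) (d : ℕ) :
    Submodule ℂ V where
  carrier := {v | Low T W d v}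
  add_mem' := fun h1 h2 => Low.add d _ _ h1 h2
  zero_mem' := Low.base d 0 W.zero_mem
  smul_mem' := fun c _ h => Low.smul d c _ h

theorem low_apply (hT : IsYangianRep n T) (W : Submodule ℂ V)
    (hupW : ∀ r : ℕ, 1 ≤ r → ∀ i j : Fin n, i < j → ∀ v ∈ W, T r i j v = 0)
    (hdW : ∀ r : ℕ, 1 ≤ r → ∀ i : Fin n, ∀ v ∈ W, T r i i v ∈ W) (m : ℕ) :
    ∀ (r d : ℕ) (i j : Fin n) (v : V), r + d = m → Low T W d v →
      Low T W m (T r i j v) := by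
  induction m using Nat.strong_induction_on with
  | _ m IH =>
  intro r d i j v hm hv
  rcases Nat.eq_zero_or_pos r with rfl | hr
  · rw [hT.1 i j]
    split_ifs
    · exact hv.mono _ (by omega)
    · exact (lowSub T W m).zero_mem
  rcases lt_or_ge j i with hji | hij
  · exact Low.step r d m i j v hr hji hm.le hv
  induction hv with
  | base d w hw =>
    rcases hij.lt_or_eq with h | h
    · rw [hupW r hr i j h w hw]
      exact (lowSub T W m).zero_mem
    · subst h
      exact Low.base _ _ (hdW r hr i w hw)
  | step s d' e k l v hs hkl hd hv _ =>
    have h1 : T r i j (T s k l v) - T s k l (T r i j v) ∈ lowSub T W m := by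
      apply comm_mem hT
      intro a b hab
      have h2 := IH (b + d') (by omega) b d' i l v rfl hv
      have h3 := IH (a + (b + d')) (by omega) a (b + d') k j _ rfl h2
      exact h3.mono _ (by omega)
    have h2 := IH (r + d') (by omega) r d' i j v rfl hv
    have h3 : T s k l (T r i j v) ∈ lowSub T W m :=
      Low.step s (r + d') m k l _ hs hkl (by omega) h2
    have h4 := (lowSub T W m).add_mem h1 h3
    rw [sub_add_cancel] at h4
    exact h4
  | add d v w _ _ h1 h2 =>
    rw [map_add]
    exact Low.add _ _ _ (h1 hm) (h2 hm)
  | smul d c v _ h =>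
    rw [map_smul]
    exact Low.smul _ _ _ (h hm)

/-- The span of all lowering words applied to `W`. -/
def lowTot (T : ℕ → Fin n → Fin n → (V →ₗ[ℂ] V)) (W : Submodule ℂ V) :
    Submodule ℂ V where
  carrier := {v | ∃ d, Low T W d v}
  add_mem' := fun ⟨d, h1⟩ ⟨e, h2⟩ =>
    ⟨d + e, Low.add _ _ _ (h1.mono _ (by omega)) (h2.mono _ (by omega))⟩
  zero_mem' := ⟨0, Low.base 0 0 W.zero_mem⟩
  smul_mem' := fun c _ ⟨d, h⟩ => ⟨d, Low.smul d c _ h⟩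

theorem lowTot_le (W M : Submodule ℂ V) (hW : W ≤ M)
    (hM : ∀ r : ℕ, 1 ≤ r → ∀ i j : Fin n, j < i → ∀ v ∈ M, T r i j v ∈ M) :
    lowTot T W ≤ M := by
  rintro v ⟨d, h⟩
  induction h with
  | base d w hw => exact hW hw
  | step r d e i j v hr hij hd hv ih => exact hM r hr i j hij v ih
  | add d v w _ _ h1 h2 => exact M.add_mem h1 h2
  | smul d c v _ h => exact M.smul_mem c h

theorem lowTot_alt (hT : IsYangianRep n T)
    (hirr : ∀ U : Submodule ℂ V,
      (∀ r : ℕ, 1 ≤ r → ∀ i j : Fin n, ∀ v ∈ U, T r i j v ∈ U) → U = ⊥ ∨ U = ⊤)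
    (W : Submodule ℂ V)
    (hupW : ∀ r : ℕ, 1 ≤ r → ∀ i j : Fin n, i < j → ∀ v ∈ W, T r i j v = 0)
    (hdW : ∀ r : ℕ, 1 ≤ r → ∀ i : Fin n, ∀ v ∈ W, T r i i v ∈ W) :
    W = ⊥ ∨ lowTot T W = ⊤ := by
  rcases hirr (lowTot T W) (by
    rintro r _ i j v ⟨d, h⟩
    exact ⟨_, low_apply hT W hupW hdW (r + d) r d i j v rfl h⟩) with h | h
  · left
    rw [eq_bot_iff, ← h]
    exact fun w hw => ⟨0, Low.base 0 w hw⟩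
  · exact Or.inr h

/-- Singular vectors are stable under the diagonal generators. -/
theorem diag_singular (hT : IsYangianRep n T) (v : V)
    (hv : ∀ r : ℕ, 1 ≤ r → ∀ i j : Fin n, i < j → T r i j v = 0)
    (r s : ℕ) (i j k : Fin n) (hij : i < j) (hr : 1 ≤ r) :
    T r i j (T s k k v) = 0 := by
  have hv' : ∀ r : ℕ, ∀ i j : Fin n, i < j → T r i j v = 0 := by
    intro r i j h
    rcases Nat.eq_zero_or_pos r with rfl | hr
    · rw [hT.1, if_neg h.ne]; rfl
    · exact hv r hr i j h
  rcases lt_or_ge k j with h | h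
  · have := comm_mem hT k k i j v ⊥ s r (by
      intro a b _
      rw [hv' b k j h, map_zero]; exact Submodule.zero_mem _)
    rw [Submodule.mem_bot, hv r hr i j hij, map_zero, zero_sub, neg_eq_zero] at this
    exact this
  · have := comm_mem hT i j k k v ⊥ r s (by
      intro a b _
      rw [hv' b i k (hij.trans_le h), map_zero]; exact Submodule.zero_mem _)
    rw [Submodule.mem_bot, hv r hr i j hij, map_zero, sub_zero] at this
    exact this

/-- The grading operator. -/
noncomputable def gr (T : ℕ → Fin n → Fin n → (V →ₗ[ℂ] V)) : Module.End ℂ V :=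
  ∑ i : Fin n, (-((i : ℕ) : ℂ)) • T 1 i i

theorem gr_apply (v : V) : gr T v = ∑ i : Fin n, (-((i : ℕ) : ℂ)) • T 1 i i v := by
  simp [gr, LinearMap.sum_apply]

theorem gr_comm (hT : IsYangianRep n T) (s : ℕ) (k l : Fin n) (v : V) :
    gr T (T s k l v) = T s k l (gr T v) + (((l : ℕ) : ℂ) - ((k : ℕ) : ℂ)) • T s k l v := by
  have h : ∀ i : Fin n, T 1 i i (T s k l v) = T s k l (T 1 i i v)
      + ((if i = k then (1 : ℂ) else 0) - (if i = l then (1 : ℂ) else 0)) • T s k l v := by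
    intro i
    have h2 := LinearMap.congr_fun (hT.2 0 s i i k l) v
    simp only [LinearMap.sub_apply, LinearMap.comp_apply] at h2
    simp only [hT.1, if_true, LinearMap.id_apply, zero_add, sub_self, sub_zero] at h2
    rw [sub_eq_iff_eq_add'] at h2
    rw [h2]
    by_cases h3 : i = k <;> by_cases h4 : i = l
    · subst h3; subst h4; simp
    · subst h3; simp [h4]
    · subst h4; simp [h3, Ne.symm h3]
    · simp [h3, h4, Ne.symm h3]
  rw [gr_apply, gr_apply, map_sum]
  simp only [h, smul_add, Finset.sum_add_distrib, smul_smul, map_smul]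
  congr 1
  rw [← Finset.sum_smul]
  congr 1
  simp only [mul_sub, Finset.sum_sub_distrib, mul_ite, mul_one, mul_zero,
    Finset.sum_ite_eq', Finset.mem_univ, if_true]
  ring

/-- The sum of the strictly lower graded pieces. -/
noncomputable def lower (T : ℕ → Fin n → Fin n → (V →ₗ[ℂ] V)) (c : ℂ) : Submodule ℂ V :=
  ⨆ k : ℕ, Module.End.eigenspace (gr T) (c - ((k : ℂ) + 1))

theorem lower_stable (hT : IsYangianRep n T) (c : ℂ) (s : ℕ) (k l : Fin n) (h : l ≤ k)
    (v : V) (hv : v ∈ lower T c) : T s k l v ∈ lower T c := by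
  have : lower T c ≤ (lower T c).comap (T s k l) := by
    refine iSup_le fun m => ?_
    intro w hw
    rw [Module.End.mem_eigenspace_iff] at hw
    refine Submodule.mem_iSup_of_mem (m + ((k : ℕ) - (l : ℕ))) ?_
    rw [Module.End.mem_eigenspace_iff, gr_comm hT, hw, map_smul, ← add_smul]
    congr 1
    have h' : (l : ℕ) ≤ (k : ℕ) := h
    push_cast [Nat.cast_sub h']
    ring
  exact this hv

theorem lower_of_top (hT : IsYangianRep n T) (c : ℂ) (s : ℕ) (k l : Fin n) (h : l < k)
    (v : V) (hv : gr T v = c • v) : T s k l v ∈ lower T c := by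
  refine Submodule.mem_iSup_of_mem ((k : ℕ) - (l : ℕ) - 1) ?_
  rw [Module.End.mem_eigenspace_iff, gr_comm hT, hv, map_smul, ← add_smul]
  congr 1
  have h' : (l : ℕ) < (k : ℕ) := h
  obtain ⟨e, he⟩ := Nat.exists_eq_add_of_lt h'
  rw [he, show (l : ℕ) + e + 1 - (l : ℕ) - 1 = e by omega]
  push_cast
  ring

theorem not_mem_lower (c : ℂ) (v : V) (hv : gr T v = c • v) (h : v ∈ lower T c) : v = 0 := by
  have h1 := (Module.End.eigenspaces_iSupIndep (gr T)) c
  refine (Submodule.disjoint_def.1 h1) v (Module.End.mem_eigenspace_iff.2 hv) ?_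
  refine (iSup_le fun k => ?_ : lower T c ≤ _) h
  refine le_iSup₂_of_le (c - ((k : ℂ) + 1)) ?_ le_rfl
  intro h2
  have h3 : ((k : ℂ) + 1) = 0 := by linear_combination -h2
  exact Nat.cast_add_one_ne_zero k h3

end YangianAux

open YangianAux
/-- In an irreducible highest weight representation of the
Yangian `Y(gl_n)`, every vector annihilated by all `T^{(r)}_{ij}` with `i < j`
is a scalar multiple of the highest vector. -/
theorem singular_vector_proportional_highest
    (n : ℕ) {V : Type*} [AddCommGroup V] [Module ℂ V]
    (T : ℕ → Fin n → Fin n → (V →ₗ[ℂ] V)) (hT : IsYangianRep n T)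
    (hirr : ∀ U : Submodule ℂ V,
      (∀ r : ℕ, 1 ≤ r → ∀ i j : Fin n, ∀ v ∈ U, T r i j v ∈ U) → U = ⊥ ∨ U = ⊤)
    (ζ₀ : V) (hζ₀ : ζ₀ ≠ 0)
    (hup : ∀ r : ℕ, 1 ≤ r → ∀ i j : Fin n, i < j → T r i j ζ₀ = 0)
    (hdiag : ∀ r : ℕ, 1 ≤ r → ∀ i : Fin n, ∃ c : ℂ, T r i i ζ₀ = c • ζ₀)
    (ζ : V) (hζ : ∀ r : ℕ, 1 ≤ r → ∀ i j : Fin n, i < j → T r i j ζ = 0) :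
    ∃ c : ℂ, ζ = c • ζ₀ := by
  choose f hf using hdiag 1 le_rfl
  obtain ⟨c, hc⟩ : ∃ c : ℂ, gr T ζ₀ = c • ζ₀ := by
    refine ⟨∑ i : Fin n, (-((i : ℕ) : ℂ)) * f i, ?_⟩
    rw [gr_apply, Finset.sum_smul]
    exact Finset.sum_congr rfl fun i _ => by rw [hf i, smul_smul]
  -- the whole space is spanned by the highest vector and the lower graded pieces
  have htop : Submodule.span ℂ {ζ₀} ⊔ lower T c = ⊤ := by
    have h1 := lowTot_alt hT hirr (Submodule.span ℂ {ζ₀})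
      (by
        intro r hr i j hij v hv
        obtain ⟨a, rfl⟩ := Submodule.mem_span_singleton.1 hv
        rw [map_smul, hup r hr i j hij, smul_zero])
      (by
        intro r hr i v hv
        obtain ⟨a, rfl⟩ := Submodule.mem_span_singleton.1 hv
        obtain ⟨b, hb⟩ := hdiag r hr i
        rw [map_smul, hb]
        exact Submodule.smul_mem _ _
          (Submodule.smul_mem _ _ (Submodule.mem_span_singleton_self _)))
    rcases h1 with h1 | h1
    · exact absurd (Submodule.span_singleton_eq_bot.1 h1) hζ₀
    · rw [eq_top_iff, ← h1]
      refine lowTot_le _ _ le_sup_left ?_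
      intro r hr i j hij v hv
      obtain ⟨x, hx, y, hy, rfl⟩ := Submodule.mem_sup.1 hv
      obtain ⟨a, rfl⟩ := Submodule.mem_span_singleton.1 hx
      refine Submodule.mem_sup_right ?_
      rw [map_add, map_smul]
      exact Submodule.add_mem _
        (Submodule.smul_mem _ _ (lower_of_top hT c r i j hij ζ₀ hc))
        (lower_stable hT c r i j hij.le y hy)
  -- singular vectors in the lower pieces
  let W : Submodule ℂ V :=
    { carrier := {v | v ∈ lower T c ∧
        ∀ r : ℕ, 1 ≤ r → ∀ i j : Fin n, i < j → T r i j v = 0}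
      add_mem' := fun {a b} ha hb => ⟨Submodule.add_mem _ ha.1 hb.1, fun r hr i j hij => by
        rw [map_add, ha.2 r hr i j hij, hb.2 r hr i j hij, add_zero]⟩
      zero_mem' := ⟨Submodule.zero_mem _, fun r hr i j hij => map_zero _⟩
      smul_mem' := fun a v hv => ⟨Submodule.smul_mem _ _ hv.1, fun r hr i j hij => by
        rw [map_smul, hv.2 r hr i j hij, smul_zero]⟩ }
  have hW : W = ⊥ := by
    rcases lowTot_alt hT hirr W (fun r hr i j hij v hv => hv.2 r hr i j hij)
      (fun r hr i v hv => ⟨lower_stable hT c r i i le_rfl v hv.1,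
        fun s hs k l hkl => diag_singular hT v hv.2 s r k l i hkl hs⟩) with h | h
    · exact h
    · have h2 : lowTot T W ≤ lower T c := lowTot_le _ _ (fun v hv => hv.1)
        (fun r hr i j hij v hv => lower_stable hT c r i j hij.le v hv)
      rw [h] at h2
      exact absurd (not_mem_lower c ζ₀ hc (h2 Submodule.mem_top)) hζ₀
  have hmem : ζ ∈ Submodule.span ℂ {ζ₀} ⊔ lower T c := by rw [htop]; exact Submodule.mem_top
  obtain ⟨x, hx, y, hy, hxy⟩ := Submodule.mem_sup.1 hmem
  obtain ⟨a, rfl⟩ := Submodule.mem_span_singleton.1 hx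
  have hyW : y ∈ W := by
    refine ⟨hy, fun r hr i j hij => ?_⟩
    have h1 := hζ r hr i j hij
    rw [← hxy, map_add, map_smul, hup r hr i j hij, smul_zero, zero_add] at h1
    exact h1
  rw [hW, Submodule.mem_bot] at hyW
  exact ⟨a, by rw [← hxy, hyW, add_zero]⟩
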